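/- Suppose f ∈ H¹(I,ℝⁿ), for each ε > 0 let u_ε be the minimizer of E_ε over H¹(I,ℝⁿ), and let u be a minimizer of the energy E. Then u_ε converges to u in L²(I,ℝⁿ) as ε → 0⁺, i.e. ∫_I ‖u_ε − u‖² → 0 along the filter of ε tending to 0 from the right. -/

import Mathlib

open MeasureTheory Set Filter
open scoped ENNReal

noncomputable section

/-- Square-integrability of `w` on the set `S`. -/
def SqIntOn {n : ℕ} (w : ℝ → EuclideanSpace ℝ (Fin n)) (S : Set ℝ) : Prop :=
  MeasureTheory.IntegrableOn (fun x => ‖w x‖ ^ 2) S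

/-- The Rudin–Osher–Fatemi energy with fidelity weight `1/(2 lam)`, datum `f`,
on the interval `I = Ioo a b`. -/
def rofEnergy {n : ℕ} (lam a b : ℝ) (f w : ℝ → EuclideanSpace ℝ (Fin n)) : ℝ≥0∞ :=
  eVariationOn w (Set.Ioo a b) +
    ENNReal.ofReal ((1 / (2 * lam)) * ∫ x in Set.Ioo a b, ‖w x - f x‖ ^ 2)

/-- `u` is a minimizer of the ROF energy among Borel measurable functions
square-integrable on `Ioo a b`. -/
def IsMinimizer {n : ℕ} (lam a b : ℝ) (f u : ℝ → EuclideanSpace ℝ (Fin n)) : Prop :=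
  Measurable u ∧ SqIntOn u (Set.Ioo a b) ∧
    ∀ w : ℝ → EuclideanSpace ℝ (Fin n), Measurable w → SqIntOn w (Set.Ioo a b) →
      rofEnergy lam a b f u ≤ rofEnergy lam a b f w

/-- `w` belongs to `H¹(I, ℝⁿ)` with (weak) derivative `w'`: it is continuous on `[a,b]`,
`w'` is square-integrable on `I = Ioo a b`, and the fundamental theorem of calculus holds. -/
def InH1 {n : ℕ} (a b : ℝ) (w w' : ℝ → EuclideanSpace ℝ (Fin n)) : Prop :=
  ContinuousOn w (Set.Icc a b) ∧
  MeasureTheory.IntegrableOn (fun x => ‖w' x‖ ^ 2) (Set.Ioo a b) ∧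
  ∀ x ∈ Set.Icc a b, ∀ y ∈ Set.Icc a b, w y - w x = ∫ t in x..y, w' t

/-- The regularized energy `E_ε` evaluated at `w ∈ H¹` with derivative `w'`. -/
def regEnergy {n : ℕ} (lam ε a b : ℝ) (f w w' : ℝ → EuclideanSpace ℝ (Fin n)) : ℝ :=
  ∫ x in Set.Ioo a b, ((1 / (2 * lam)) * ‖w x - f x‖ ^ 2
    + Real.sqrt (‖w' x‖ ^ 2 + ε ^ 2) + (ε ^ 2 / 2) * ‖w' x‖ ^ 2)

/-- `u` (with derivative `u'`) minimizes `E_ε` over `H¹(I, ℝⁿ)`. -/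
def IsMinimizerEps {n : ℕ} (lam ε a b : ℝ) (f u u' : ℝ → EuclideanSpace ℝ (Fin n)) : Prop :=
  InH1 a b u u' ∧ ∀ v v' : ℝ → EuclideanSpace ℝ (Fin n), InH1 a b v v' →
    regEnergy lam ε a b f u u' ≤ regEnergy lam ε a b f v v'

/-!
The fidelity term makes `rofEnergy` uniformly convex: comparing the minimizer `u` with the midpoint
of `u` and `w` gives `E(u) + (1 / (4λ)) ∫ ‖w - u‖² ≤ E(w)`. On `H¹` the variation is at most
`∫ ‖w'‖`, so `E ≤ E_ε` there, and it remains to see that `limsup E_ε(u_ε) ≤ E(u)`. By minimality of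
`u_ε` it suffices to find, for every `c > E(u)`, a single `v ∈ H¹` with `lim E_ε(v) < c`. A Steklov
average of `u` with small step will do, once `u` has been extended to the whole line without
increasing its variation.
-/

open scoped Topology

section Variation

theorem eVariationOn_le_of_tendsto_comp {ι α β E : Type*} [LinearOrder α] [LinearOrder β]
    [PseudoEMetricSpace E] {p : Filter ι} [p.NeBot] {φ : ι → α → β} {u : β → E} {g : α → E}
    {s : Set β} {t : Set α} (hmono : ∀ᶠ i in p, MonotoneOn (φ i) t)
    (hmaps : ∀ᶠ i in p, MapsTo (φ i) t s)
    (hlim : ∀ x ∈ t, Tendsto (fun i => u (φ i x)) p (𝓝 (g x))) :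
    eVariationOn g t ≤ eVariationOn u s := by
  refine le_of_forall_lt fun v hv => ?_
  obtain ⟨i, hvi, himono, himaps⟩ :=
    ((eVariationOn.lowerSemicontinuous_aux hlim hv).and (hmono.and hmaps)).exists
  exact hvi.trans_le (eVariationOn.comp_le_of_monotoneOn u _ himono himaps)

theorem eventually_clamp_mem_Ioo {a b : ℝ} (hab : a < b) :
    ∀ᶠ δ in 𝓝[>] 0, ∀ x, max (a + δ) (min (b - δ) x) ∈ Ioo a b := by
  filter_upwards [Ioo_mem_nhdsGT (show 0 < (b - a) / 2 by linarith)] with δ hδ x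
  grind

theorem tendsto_clamp_nhdsWithin_Ioo {a b : ℝ} (hab : a < b) (x : ℝ) :
    Tendsto (fun δ => max (a + δ) (min (b - δ) x)) (𝓝[>] 0) (𝓝[Ioo a b] (max a (min b x))) := by
  refine tendsto_nhdsWithin_iff.2 ⟨?_, (eventually_clamp_mem_Ioo hab).mono fun δ hδ => hδ x⟩
  have hcont : Continuous fun δ => max (a + δ) (min (b - δ) x) := by fun_prop
  simpa using (hcont.tendsto 0).mono_left nhdsWithin_le_nhds

theorem exists_measurable_extension_eVariationOn_le {E : Type*} [PseudoEMetricSpace E]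
    [CompleteSpace E] [MeasurableSpace E] {u : ℝ → E} {a b : ℝ} (hab : a < b)
    (hu : Measurable u) (hbv : BoundedVariationOn u (Ioo a b)) :
    ∃ g : ℝ → E, Measurable g ∧ EqOn g u (Ioo a b) ∧
      eVariationOn g univ ≤ eVariationOn u (Ioo a b) := by
  obtain ⟨l, hl⟩ := hbv.exists_tendsto_right a
  obtain ⟨r, hr⟩ := hbv.exists_tendsto_left b
  let g : ℝ → E := (Iic a).piecewise (fun _ => l) ((Ici b).piecewise (fun _ => r) u)
  let clamp (δ x : ℝ) : ℝ := max (a + δ) (min (b - δ) x)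
  have tendsto_u_clamp (x : ℝ) : Tendsto (fun δ => u (clamp δ x)) (𝓝[>] 0) (𝓝 (g x)) := by
    have hclamp := tendsto_clamp_nhdsWithin_Ioo hab x
    rcases le_or_gt x a with hxa | hax
    · rw [min_eq_right (hxa.trans hab.le), max_eq_left hxa] at hclamp
      simpa [g, hxa, Function.comp_def] using
        hl.comp (hclamp.mono_right (nhdsWithin_mono _ fun y hy => ⟨hy, hy.1⟩))
    rcases le_or_gt b x with hbx | hxb
    · rw [min_eq_left hbx, max_eq_right hab.le] at hclamp
      simpa [g, hax.not_ge, hbx, Function.comp_def] using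
        hr.comp (hclamp.mono_right (nhdsWithin_mono _ fun y hy => ⟨hy, hy.2⟩))
    · have hδ_small : ∀ᶠ δ in 𝓝[>] (0 : ℝ), δ < x - a ∧ δ < b - x :=
        nhdsWithin_le_nhds ((eventually_lt_nhds (by linarith)).and
          (eventually_lt_nhds (by linarith)))
      refine tendsto_const_nhds.congr' (hδ_small.mono fun δ hδ => ?_)
      have clamp_eq_self : clamp δ x = x := by grind
      simp [g, clamp_eq_self, hax.not_ge, hxb.not_ge]
  refine ⟨g, .piecewise measurableSet_Iic measurable_const
    (.piecewise measurableSet_Ici measurable_const hu), fun x hx => ?_, ?_⟩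
  · simp [g, hx.1.not_ge, hx.2.not_ge]
  · exact eVariationOn_le_of_tendsto_comp (φ := clamp)
      (.of_forall fun δ _ _ _ _ h => max_le_max le_rfl (min_le_min le_rfl h))
      ((eventually_clamp_mem_Ioo hab).mono fun δ hδ x _ => hδ x) fun x _ => tendsto_u_clamp x

theorem eVariationOn_midpoint_le {α E : Type*} [LinearOrder α] [SeminormedAddCommGroup E]
    [NormedSpace ℝ E] (u w : α → E) (s : Set α) :
    2 * eVariationOn (fun x => midpoint ℝ (u x) (w x)) s ≤ eVariationOn u s + eVariationOn w s := by
  have edist_midpoint_le (x y : α) :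
      2 * edist (midpoint ℝ (u x) (w x)) (midpoint ℝ (u y) (w y)) ≤
        edist (u x) (u y) + edist (w x) (w y) := by
    have h := dist_midpoint_midpoint_le (u x) (w x) (u y) (w y)
    simp only [edist_dist]
    rw [← ENNReal.ofReal_ofNat, ← ENNReal.ofReal_mul zero_le_two,
      ← ENNReal.ofReal_add dist_nonneg dist_nonneg]
    exact ENNReal.ofReal_le_ofReal (by linarith)
  rw [eVariationOn, ENNReal.mul_iSup]
  refine iSup_le fun ⟨n, p, hp, hps⟩ => ?_
  rw [Finset.mul_sum]
  calc _ ≤ ∑ i ∈ Finset.range n,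
        (edist (u (p (i + 1))) (u (p i)) + edist (w (p (i + 1))) (w (p i))) :=
      Finset.sum_le_sum fun i _ => edist_midpoint_le _ _
    _ ≤ _ := by
      rw [Finset.sum_add_distrib]
      exact add_le_add (eVariationOn.sum_le hp hps) (eVariationOn.sum_le hp hps)

variable {E : Type*} [NormedAddCommGroup E]

theorem norm_le_norm_add_eVariationOn {α : Type*} [LinearOrder α] {g : α → E} {s : Set α}
    (hg : BoundedVariationOn g s) {x y : α} (hx : x ∈ s) (hy : y ∈ s) :
    ‖g y‖ ≤ ‖g x‖ + (eVariationOn g s).toReal :=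
  (norm_le_norm_add_norm_sub (g x) (g y)).trans <| by
    gcongr; simpa [dist_eq_norm] using hg.dist_le hx hy

theorem eVariationOn_le_lintegral_enorm [NormedSpace ℝ E] {w w' : ℝ → E} {s : Set ℝ}
    [s.OrdConnected] (hw : ∀ x ∈ s, ∀ y ∈ s, w y - w x = ∫ t in x..y, w' t) :
    eVariationOn w s ≤ ∫⁻ t in s, ‖w' t‖ₑ := by
  refine iSup_le fun ⟨n, p, hp, hps⟩ => ?_
  calc ∑ i ∈ Finset.range n, edist (w (p (i + 1))) (w (p i))
      ≤ ∑ i ∈ Finset.range n, ∫⁻ t in Ioc (p i) (p (i + 1)), ‖w' t‖ₑ := by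
        refine Finset.sum_le_sum fun i _ => ?_
        rw [edist_eq_enorm_sub, hw _ (hps _) _ (hps _),
          intervalIntegral.integral_of_le (hp i.le_succ)]
        exact enorm_integral_le_lintegral_enorm _
    _ = ∫⁻ t in ⋃ i ∈ Finset.range n, Ioc (p i) (p (i + 1)), ‖w' t‖ₑ :=
        (lintegral_biUnion_finset (hp.pairwise_disjoint_on_Ioc_succ.set_pairwise _)
          (fun _ _ => measurableSet_Ioc) _).symm
    _ ≤ ∫⁻ t in s, ‖w' t‖ₑ :=
        lintegral_mono_set <| iUnion₂_subset fun i _ =>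
          Ioc_subset_Icc_self.trans (s.Icc_subset (hps _) (hps _))

theorem integral_translate_sub_le {W : ℝ → ℝ} (hW : Monotone W) {a b h : ℝ} (hh : 0 ≤ h) :
    ∫ x in a..b, (W (x + h) - W x) ≤ h * (W (b + h) - W a) := by
  have hWi (x y : ℝ) : IntervalIntegrable W volume x y := hW.intervalIntegrable
  have upper : ∫ x in b..b + h, W x ≤ ∫ _ in b..b + h, W (b + h) :=
    intervalIntegral.integral_mono_on (by linarith) (hWi _ _) intervalIntegrable_const
      fun x hx => hW hx.2
  have lower : ∫ _ in a..a + h, W a ≤ ∫ x in a..a + h, W x :=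
    intervalIntegral.integral_mono_on (by linarith) intervalIntegrable_const (hWi _ _)
      fun x hx => hW hx.1
  have hWi_add : IntervalIntegrable (fun x => W (x + h)) volume a b :=
    (hW.comp add_left_mono).intervalIntegrable
  rw [intervalIntegral.integral_sub hWi_add (hWi _ _),
    intervalIntegral.integral_comp_add_right,
    intervalIntegral.integral_interval_sub_interval_comm' (hWi _ _) (hWi _ _) (hWi _ _)]
  simp only [intervalIntegral.integral_const, add_sub_cancel_left, smul_eq_mul] at upper lower
  linarith

theorem integral_norm_translate_sub_le {g : ℝ → E} (hg : BoundedVariationOn g univ) {a b h : ℝ}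
    (hab : a ≤ b) (hh : 0 ≤ h) :
    ∫ x in a..b, ‖g (x + h) - g x‖ ≤ h * (eVariationOn g univ).toReal := by
  let W := variationOnFromTo g univ 0
  have W_sub (x y : ℝ) : W y - W x = variationOnFromTo g univ x y :=
    variationOnFromTo.sub_right hg.locallyBoundedVariationOn (mem_univ _) (mem_univ _) (mem_univ _)
  have hW : Monotone W := monotoneOn_univ.1 <|
    variationOnFromTo.monotoneOn hg.locallyBoundedVariationOn (mem_univ 0)
  have norm_sub_le (x : ℝ) : ‖g (x + h) - g x‖ ≤ W (x + h) - W x := by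
    rw [W_sub, variationOnFromTo.eq_of_le _ _ (by linarith), ← dist_eq_norm]
    exact (hg.mono inter_subset_left).dist_le (by simp [hh]) (by simp [hh])
  calc ∫ x in a..b, ‖g (x + h) - g x‖ ≤ ∫ x in a..b, (W (x + h) - W x) := by
        simp only [intervalIntegral.integral_of_le hab]
        refine integral_mono_of_nonneg (.of_forall fun _ => norm_nonneg _) ?_
          (.of_forall norm_sub_le)
        exact (((hW.comp add_left_mono).intervalIntegrable).sub hW.intervalIntegrable).1
    _ ≤ h * (W (b + h) - W a) := integral_translate_sub_le hW hh
    _ ≤ h * (eVariationOn g univ).toReal := by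
        rw [W_sub]
        exact mul_le_mul_of_nonneg_left
          ((le_abs_self _).trans (variationOnFromTo.abs_le_eVariationOn hg)) hh

end Variation

section Steklov

variable {E : Type*} [NormedAddCommGroup E] {g : ℝ → E}

theorem intervalIntegrable_of_locallyIntegrable (hg : LocallyIntegrable g) (x y : ℝ) :
    IntervalIntegrable g volume x y :=
  (hg.integrableOn_isCompact isCompact_uIcc).intervalIntegrable

variable [NormedSpace ℝ E] {h : ℝ}

/-- The Steklov average of `g` with step `h`, a smoothing of `g` whose derivative is the difference
quotient of `g`. It vanishes at the junk value `h = 0`. -/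
def steklov (h : ℝ) (g : ℝ → E) (x : ℝ) : E :=
  h⁻¹ • ∫ t in x..x + h, g t

theorem steklov_sub_steklov (hg : LocallyIntegrable g) (x y : ℝ) :
    steklov h g y - steklov h g x = ∫ t in x..y, h⁻¹ • (g (t + h) - g t) := by
  have hgi := intervalIntegrable_of_locallyIntegrable hg
  rw [steklov, steklov, intervalIntegral.integral_smul,
    intervalIntegral.integral_sub (by simpa using (hgi (x + h) (y + h)).comp_add_right h) (hgi _ _),
    intervalIntegral.integral_comp_add_right, ← smul_sub,
    intervalIntegral.integral_interval_sub_interval_comm' (hgi _ _) (hgi _ _) (hgi _ _)]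

theorem continuous_steklov (hg : LocallyIntegrable g) : Continuous (steklov h g) := by
  have hgi := intervalIntegrable_of_locallyIntegrable hg
  have primitive := intervalIntegral.continuous_primitive hgi 0
  have steklov_eq : steklov h g = fun x =>
      h⁻¹ • ((∫ t in 0..x + h, g t) - ∫ t in 0..x, g t) := funext fun x => by
    rw [steklov, intervalIntegral.integral_interval_sub_left (hgi _ _) (hgi _ _)]
  rw [steklov_eq]
  fun_prop

theorem norm_steklov_le {C : ℝ} (hg : ∀ t, ‖g t‖ ≤ C) (x : ℝ) : ‖steklov h g x‖ ≤ C := by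
  have hC : 0 ≤ C := (norm_nonneg _).trans (hg 0)
  calc ‖steklov h g x‖ ≤ |h|⁻¹ * (C * |h|) := by
        rw [steklov, norm_smul, norm_inv, Real.norm_eq_abs]
        gcongr
        simpa using intervalIntegral.norm_integral_le_of_norm_le_const (a := x) (b := x + h)
          fun t _ => hg t
    _ = C * (|h|⁻¹ * |h|) := by ring
    _ ≤ C := mul_le_of_le_one_right hC (inv_mul_le_one)

theorem ae_tendsto_steklov [CompleteSpace E] (hg : LocallyIntegrable g) :
    ∀ᵐ x, Tendsto (fun h => steklov h g x) (𝓝[>] 0) (𝓝 (g x)) := by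
  filter_upwards [LocallyIntegrable.ae_hasDerivAt_integral hg] with x hx
  simpa [steklov] using (hx x).tendsto_slope_zero_right

theorem tendsto_setIntegral_norm_steklov_sub_sq [CompleteSpace E] {f : ℝ → E} {C : ℝ} {s : Set ℝ}
    (hs : volume s ≠ ∞) (hgm : AEStronglyMeasurable g) (hC : ∀ t, ‖g t‖ ≤ C)
    (hf : MemLp f 2 (volume.restrict s)) :
    Tendsto (fun h => ∫ x in s, ‖steklov h g x - f x‖ ^ 2) (𝓝[>] 0)
      (𝓝 (∫ x in s, ‖g x - f x‖ ^ 2)) := by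
  have : IsFiniteMeasure (volume.restrict s) := isFiniteMeasure_restrict.2 hs
  have hgl : LocallyIntegrable g :=
    (memLp_top_of_bound hgm C (.of_forall hC)).locallyIntegrable le_top
  refine tendsto_integral_filter_of_dominated_convergence (fun x => (C + ‖f x‖) ^ 2)
    (.of_forall fun h => ?_) (.of_forall fun h => .of_forall fun x => ?_) ?_ ?_
  · exact ((continuous_steklov hgl).aestronglyMeasurable.sub hf.1).norm.pow 2
  · rw [norm_pow, norm_norm]
    gcongr
    exact (norm_sub_le _ _).trans (by gcongr; exact norm_steklov_le hC x)
  · exact ((memLp_const C).add hf.norm).integrable_sq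
  · filter_upwards [ae_restrict_of_ae (ae_tendsto_steklov hgl)] with x hx
    exact ((hx.sub_const (f x)).norm).pow 2

end Steklov

section SquareIntegrable

variable {α E : Type*} [MeasurableSpace α] {μ : Measure α} [NormedAddCommGroup E]

theorem integrable_norm_sub_sq {u w : α → E} (hu : MemLp u 2 μ) (hw : MemLp w 2 μ) :
    Integrable (fun x => ‖u x - w x‖ ^ 2) μ :=
  (hu.sub hw).integrable_norm_pow two_ne_zero

theorem memLp_midpoint [NormedSpace ℝ E] {p : ℝ≥0∞} {u w : α → E} (hu : MemLp u p μ)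
    (hw : MemLp w p μ) : MemLp (fun x => midpoint ℝ (u x) (w x)) p μ := by
  simpa only [midpoint_eq_smul_add] using! (hu.add hw).const_smul (⅟2 : ℝ)

theorem integral_norm_sq_midpoint_sub [InnerProductSpace ℝ E] {f u w : α → E} (hf : MemLp f 2 μ)
    (hu : MemLp u 2 μ) (hw : MemLp w 2 μ) :
    2 * (∫ x, ‖midpoint ℝ (u x) (w x) - f x‖ ^ 2 ∂μ) + (1 / 2) * ∫ x, ‖w x - u x‖ ^ 2 ∂μ =
      (∫ x, ‖u x - f x‖ ^ 2 ∂μ) + ∫ x, ‖w x - f x‖ ^ 2 ∂μ := by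
  rw [← integral_const_mul, ← integral_const_mul, ← integral_add
    ((integrable_norm_sub_sq (memLp_midpoint hu hw) hf).const_mul _)
    ((integrable_norm_sub_sq hw hu).const_mul _),
    ← integral_add (integrable_norm_sub_sq hu hf) (integrable_norm_sub_sq hw hf)]
  congr with x
  have apollonius :=
    EuclideanGeometry.dist_sq_add_dist_sq_eq_two_mul_dist_midpoint_sq_add_half_dist_sq
      (f x) (u x) (w x)
  simp only [dist_eq_norm, norm_sub_rev (f x), norm_sub_rev (u x) (w x)] at apollonius
  linarith

end SquareIntegrable

section SobolevFunctions

variable {n : ℕ} {a b : ℝ} {g w w' : ℝ → EuclideanSpace ℝ (Fin n)}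

theorem inH1_steklov (hg : MemLp g ∞) (h : ℝ) :
    InH1 a b (steklov h g) (fun x => h⁻¹ • (g (x + h) - g x)) := by
  have hgl : LocallyIntegrable g := hg.locallyIntegrable le_top
  have hdiff : MemLp (fun x => h⁻¹ • (g (x + h) - g x)) ∞ :=
    ((hg.comp_measurePreserving (measurePreserving_add_right volume h)).sub hg).const_smul h⁻¹
  refine ⟨(continuous_steklov hgl).continuousOn, ?_, fun x _ y _ => steklov_sub_steklov hgl x y⟩
  exact ((hdiff.restrict _).mono_exponent le_top).integrable_norm_pow two_ne_zero

theorem InH1.memLp (hw : InH1 a b w w') : MemLp w 2 (volume.restrict (Ioo a b)) := by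
  obtain ⟨C, hC⟩ := isCompact_Icc.exists_bound_of_continuousOn hw.1
  exact .of_bound ((hw.1.mono Ioo_subset_Icc_self).aestronglyMeasurable measurableSet_Ioo) C
    (ae_restrict_of_forall_mem measurableSet_Ioo fun x hx => hC x (Ioo_subset_Icc_self hx))

-- `w'` itself need not be measurable: `InH1` only asks that `‖w'‖ ^ 2` be integrable.
theorem InH1.memLp_norm_deriv (hw : InH1 a b w w') :
    MemLp (fun x => ‖w' x‖) 2 (volume.restrict (Ioo a b)) := by
  have hmeas : AEStronglyMeasurable (fun x => ‖w' x‖) (volume.restrict (Ioo a b)) := by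
    simpa using Real.continuous_sqrt.comp_aestronglyMeasurable hw.2.1.aestronglyMeasurable
  exact (memLp_two_iff_integrable_sq hmeas).2 hw.2.1

theorem InH1.eVariationOn_le (hw : InH1 a b w w') :
    eVariationOn w (Ioo a b) ≤ ENNReal.ofReal (∫ x in Ioo a b, ‖w' x‖) := by
  rw [ofReal_integral_eq_lintegral_ofReal (hw.memLp_norm_deriv.integrable one_le_two)
    (.of_forall fun _ => norm_nonneg _)]
  simpa only [ofReal_norm] using eVariationOn_le_lintegral_enorm fun x hx y hy =>
    hw.2.2 x (Ioo_subset_Icc_self hx) y (Ioo_subset_Icc_self hy)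

end SobolevFunctions

section RegularizedEnergy

variable {n : ℕ} {a b lam ε : ℝ} {f u w w' : ℝ → EuclideanSpace ℝ (Fin n)}

/-- The Lagrangian of `E_ε`: `regEnergy` is its integral over `Ioo a b`. At `ε = 0` that integral is
the unregularized energy, with `∫ ‖w'‖` in place of the total variation. -/
def regDensity (lam ε : ℝ) (f w w' : ℝ → EuclideanSpace ℝ (Fin n)) (x : ℝ) : ℝ :=
  (1 / (2 * lam)) * ‖w x - f x‖ ^ 2 + Real.sqrt (‖w' x‖ ^ 2 + ε ^ 2) + (ε ^ 2 / 2) * ‖w' x‖ ^ 2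

theorem regDensity_nonneg (hlam : 0 ≤ lam) (ε : ℝ) (f w w' : ℝ → EuclideanSpace ℝ (Fin n))
    (x : ℝ) : 0 ≤ regDensity lam ε f w w' x := by
  unfold regDensity; positivity

theorem regDensity_mono {δ : ℝ} (hε : 0 ≤ ε) (hεδ : ε ≤ δ) (x : ℝ) :
    regDensity lam ε f w w' x ≤ regDensity lam δ f w w' x := by
  unfold regDensity; gcongr

theorem integrableOn_regDensity (lam ε : ℝ) (hf : MemLp f 2 (volume.restrict (Ioo a b)))
    (hw : InH1 a b w w') : IntegrableOn (regDensity lam ε f w w') (Ioo a b) := by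
  have hsqrt : IntegrableOn (fun x => Real.sqrt (‖w' x‖ ^ 2 + ε ^ 2)) (Ioo a b) := by
    refine ((hw.memLp_norm_deriv.integrable one_le_two).add (integrable_const |ε|)).mono'
      (Real.continuous_sqrt.comp_aestronglyMeasurable
        (hw.2.1.aestronglyMeasurable.add aestronglyMeasurable_const)) (.of_forall fun x => ?_)
    rw [Real.norm_of_nonneg (Real.sqrt_nonneg _)]
    change _ ≤ ‖w' x‖ + |ε|
    refine Real.sqrt_le_iff.2 ⟨by positivity, ?_⟩
    nlinarith [sq_abs ε, mul_nonneg (norm_nonneg (w' x)) (abs_nonneg ε)]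
  exact (((integrable_norm_sub_sq hw.memLp hf).const_mul _).add hsqrt).add
    (hw.2.1.const_mul _)

theorem regEnergy_zero (hf : MemLp f 2 (volume.restrict (Ioo a b))) (hw : InH1 a b w w') :
    regEnergy lam 0 a b f w w' =
      (1 / (2 * lam)) * (∫ x in Ioo a b, ‖w x - f x‖ ^ 2) + ∫ x in Ioo a b, ‖w' x‖ := by
  rw [← integral_const_mul, ← integral_add ((integrable_norm_sub_sq hw.memLp hf).const_mul _)
    (hw.memLp_norm_deriv.integrable one_le_two)]
  simp [regEnergy]

theorem regEnergy_mono {δ : ℝ} (hf : MemLp f 2 (volume.restrict (Ioo a b))) (hw : InH1 a b w w')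
    (hε : 0 ≤ ε) (hεδ : ε ≤ δ) : regEnergy lam ε a b f w w' ≤ regEnergy lam δ a b f w w' :=
  integral_mono (integrableOn_regDensity lam ε hf hw) (integrableOn_regDensity lam δ hf hw)
    (regDensity_mono hε hεδ)

theorem tendsto_regEnergy (hlam : 0 ≤ lam) (hf : MemLp f 2 (volume.restrict (Ioo a b)))
    (hw : InH1 a b w w') :
    Tendsto (fun ε => regEnergy lam ε a b f w w') (𝓝[>] 0) (𝓝 (regEnergy lam 0 a b f w w')) := by
  refine tendsto_integral_filter_of_dominated_convergence (regDensity lam 1 f w w')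
    (.of_forall fun ε => (integrableOn_regDensity lam ε hf hw).aestronglyMeasurable) ?_
    (integrableOn_regDensity lam 1 hf hw) (.of_forall fun x => ?_)
  · filter_upwards [Ioo_mem_nhdsGT one_pos] with ε hε
    refine .of_forall fun x => ?_
    exact (Real.norm_of_nonneg (regDensity_nonneg hlam ε f w w' x)).trans_le
      (regDensity_mono hε.1.le hε.2.le x)
  · have : Continuous fun ε => regDensity lam ε f w w' x := by unfold regDensity; fun_prop
    exact (this.tendsto 0).mono_left nhdsWithin_le_nhds

theorem rofEnergy_le_regEnergy (hlam : 0 ≤ lam) (hε : 0 ≤ ε)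
    (hf : MemLp f 2 (volume.restrict (Ioo a b))) (hw : InH1 a b w w') :
    rofEnergy lam a b f w ≤ ENNReal.ofReal (regEnergy lam ε a b f w w') :=
  calc rofEnergy lam a b f w
      ≤ ENNReal.ofReal (∫ x in Ioo a b, ‖w' x‖) +
          ENNReal.ofReal ((1 / (2 * lam)) * ∫ x in Ioo a b, ‖w x - f x‖ ^ 2) := by
        rw [rofEnergy]; gcongr; exact hw.eVariationOn_le
    _ = ENNReal.ofReal (regEnergy lam 0 a b f w w') := by
        rw [regEnergy_zero hf hw, add_comm, ENNReal.ofReal_add (by positivity) (by positivity)]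
    _ ≤ ENNReal.ofReal (regEnergy lam ε a b f w w') :=
        ENNReal.ofReal_le_ofReal (regEnergy_mono hf hw le_rfl hε)

theorem exists_inH1_regEnergy_zero_lt (hab : a < b) (hlam : 0 ≤ lam)
    (hf : MemLp f 2 (volume.restrict (Ioo a b))) (hu : Measurable u) {c : ℝ}
    (huc : rofEnergy lam a b f u < ENNReal.ofReal c) :
    ∃ v v', InH1 a b v v' ∧ regEnergy lam 0 a b f v v' < c := by
  have hubv : BoundedVariationOn u (Ioo a b) := (le_self_add.trans_lt huc).ne_top
  obtain ⟨g, hgm, hgu, hgV⟩ := exists_measurable_extension_eVariationOn_le hab hu hubv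
  have hgbv : BoundedVariationOn g univ := ne_top_of_le_ne_top hubv hgV
  have hgbound (t : ℝ) := norm_le_norm_add_eVariationOn hgbv (mem_univ 0) (mem_univ t)
  set V := (eVariationOn g univ).toReal
  have energy_g_lt : (1 / (2 * lam)) * (∫ x in Ioo a b, ‖g x - f x‖ ^ 2) + V < c := by
    rw [← ENNReal.ofReal_lt_ofReal_iff_of_nonneg (by positivity), add_comm,
      ENNReal.ofReal_add (by positivity) (by positivity), ENNReal.ofReal_toReal hgbv,
      setIntegral_congr_fun measurableSet_Ioo fun x hx => by rw [hgu hx]]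
    exact (add_le_add_left hgV _).trans_lt huc
  have fidelity := tendsto_setIntegral_norm_steklov_sub_sq measure_Ioo_lt_top.ne
    hgm.aestronglyMeasurable hgbound hf
  obtain ⟨h, hlt, hh⟩ := ((((fidelity.const_mul (1 / (2 * lam))).add_const V).eventually_lt_const
    energy_g_lt).and self_mem_nhdsWithin).exists
  have slope_le : ∫ x in Ioo a b, ‖h⁻¹ • (g (x + h) - g x)‖ ≤ V := by
    have := integral_norm_translate_sub_le hgbv hab.le (le_of_lt hh)
    rw [intervalIntegral.integral_of_le hab.le, integral_Ioc_eq_integral_Ioo] at this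
    simp only [norm_smul, integral_const_mul, norm_inv, Real.norm_of_nonneg (le_of_lt hh)]
    rwa [inv_mul_le_iff₀ hh]
  have hH1 := inH1_steklov (a := a) (b := b)
    (memLp_top_of_bound hgm.aestronglyMeasurable _ (.of_forall hgbound)) h
  exact ⟨_, _, hH1, by rw [regEnergy_zero hf hH1]; linarith⟩

end RegularizedEnergy

section StrongConvexity

variable {n : ℕ} {a b lam : ℝ} {f u w w' : ℝ → EuclideanSpace ℝ (Fin n)}

theorem rofEnergy_congr (h : EqOn u w (Ioo a b)) :
    rofEnergy lam a b f u = rofEnergy lam a b f w := by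
  rw [rofEnergy, rofEnergy, eVariationOn.eq_of_eqOn h,
    setIntegral_congr_fun measurableSet_Ioo fun x hx => by rw [h hx]]

theorem two_mul_rofEnergy_midpoint_add_le (hlam : 0 ≤ lam)
    (hf : MemLp f 2 (volume.restrict (Ioo a b))) (hu : MemLp u 2 (volume.restrict (Ioo a b)))
    (hw : MemLp w 2 (volume.restrict (Ioo a b))) :
    2 * rofEnergy lam a b f (fun x => midpoint ℝ (u x) (w x)) +
        ENNReal.ofReal ((1 / (4 * lam)) * ∫ x in Ioo a b, ‖w x - u x‖ ^ 2) ≤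
      rofEnergy lam a b f u + rofEnergy lam a b f w := by
  have fidelity := integral_norm_sq_midpoint_sub hf hu hw
  have weighted : 2 * ENNReal.ofReal ((1 / (2 * lam)) *
        ∫ x in Ioo a b, ‖midpoint ℝ (u x) (w x) - f x‖ ^ 2) +
      ENNReal.ofReal ((1 / (4 * lam)) * ∫ x in Ioo a b, ‖w x - u x‖ ^ 2) =
      ENNReal.ofReal ((1 / (2 * lam)) * ∫ x in Ioo a b, ‖u x - f x‖ ^ 2) +
        ENNReal.ofReal ((1 / (2 * lam)) * ∫ x in Ioo a b, ‖w x - f x‖ ^ 2) := by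
    rw [two_mul (ENNReal.ofReal _), ← ENNReal.ofReal_add (by positivity) (by positivity),
      ← ENNReal.ofReal_add (by positivity) (by positivity),
      ← ENNReal.ofReal_add (by positivity) (by positivity),
      ← mul_add (1 / (2 * lam)) (∫ x in Ioo a b, ‖u x - f x‖ ^ 2), ← fidelity]
    ring_nf
  simp only [rofEnergy]
  rw [mul_add, add_assoc, weighted, add_add_add_comm]
  gcongr
  exact eVariationOn_midpoint_le u w _

theorem IsMinimizer.memLp (hu : IsMinimizer lam a b f u) : MemLp u 2 (volume.restrict (Ioo a b)) :=
  (memLp_two_iff_integrable_sq_norm hu.1.aestronglyMeasurable).2 hu.2.1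

theorem IsMinimizer.rofEnergy_ne_top (hu : IsMinimizer lam a b f u) :
    rofEnergy lam a b f u ≠ ∞ := by
  have hzero : rofEnergy lam a b f 0 ≠ ∞ := by
    have : eVariationOn (0 : ℝ → EuclideanSpace ℝ (Fin n)) (Ioo a b) = 0 :=
      eVariationOn.constant_on (by rintro _ ⟨_, _, rfl⟩ _ ⟨_, _, rfl⟩; rfl)
    simp [rofEnergy, this]
  exact ne_top_of_le_ne_top hzero (hu.2.2 0 measurable_zero (by simp [SqIntOn]))

theorem IsMinimizer.quadratic_growth (hlam : 0 ≤ lam)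
    (hf : MemLp f 2 (volume.restrict (Ioo a b))) (hu : IsMinimizer lam a b f u)
    (hwm : Measurable w) (hw : MemLp w 2 (volume.restrict (Ioo a b))) :
    rofEnergy lam a b f u + ENNReal.ofReal ((1 / (4 * lam)) * ∫ x in Ioo a b, ‖w x - u x‖ ^ 2) ≤
      rofEnergy lam a b f w := by
  let m x := midpoint ℝ (u x) (w x)
  have m_measurable : Measurable m := by
    simpa only [m, midpoint_eq_smul_add] using! (hu.1.add hwm).const_smul (⅟2 : ℝ)
  have u_le_m : rofEnergy lam a b f u ≤ rofEnergy lam a b f m :=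
    hu.2.2 m m_measurable ((memLp_midpoint hu.memLp hw).integrable_norm_pow two_ne_zero)
  refine (ENNReal.add_le_add_iff_left hu.rofEnergy_ne_top).1 ?_
  rw [← add_assoc, ← two_mul]
  exact (add_le_add_left (mul_le_mul_right u_le_m 2) _).trans
    (two_mul_rofEnergy_midpoint_add_le hlam hf hu.memLp hw)

theorem IsMinimizer.quadratic_growth_of_inH1 (hab : a ≤ b) (hlam : 0 ≤ lam)
    (hf : MemLp f 2 (volume.restrict (Ioo a b))) (hu : IsMinimizer lam a b f u)
    (hw : InH1 a b w w') :
    rofEnergy lam a b f u + ENNReal.ofReal ((1 / (4 * lam)) * ∫ x in Ioo a b, ‖w x - u x‖ ^ 2) ≤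
      rofEnergy lam a b f w := by
  let wext := IccExtend hab ((Icc a b).domRestrict w)
  have hext : EqOn wext w (Ioo a b) := fun x hx => IccExtend_of_mem hab _ (Ioo_subset_Icc_self hx)
  have hmeas : Measurable wext := hw.1.domRestrict.Icc_extend'.measurable
  have hLp : MemLp wext 2 (volume.restrict (Ioo a b)) :=
    hw.memLp.ae_eq (ae_restrict_of_forall_mem measurableSet_Ioo fun x hx => (hext hx).symm)
  have distance_eq : ∫ x in Ioo a b, ‖wext x - u x‖ ^ 2 = ∫ x in Ioo a b, ‖w x - u x‖ ^ 2 :=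
    setIntegral_congr_fun measurableSet_Ioo fun x hx => by simp only [hext hx]
  rw [← rofEnergy_congr hext, ← distance_eq]
  exact hu.quadratic_growth hlam hf hmeas hLp

end StrongConvexity

theorem eventually_rofEnergy_minimizerEps_lt {n : ℕ} {a b lam : ℝ} (hab : a < b) (hlam : 0 ≤ lam)
    {f w : ℝ → EuclideanSpace ℝ (Fin n)} (hf : MemLp f 2 (volume.restrict (Ioo a b)))
    {uε uε' : ℝ → ℝ → EuclideanSpace ℝ (Fin n)}
    (huε : ∀ ε : ℝ, 0 < ε → IsMinimizerEps lam ε a b f (uε ε) (uε' ε)) (hw : Measurable w)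
    {c : ℝ≥0∞} (hc : rofEnergy lam a b f w < c) :
    ∀ᶠ ε in 𝓝[>] 0, rofEnergy lam a b f (uε ε) < c := by
  obtain ⟨r, -, hwr, hrc⟩ := ENNReal.lt_iff_exists_real_btwn.1 hc
  obtain ⟨v, v', hv, hvr⟩ := exists_inH1_regEnergy_zero_lt hab hlam hf hw hwr
  filter_upwards [(tendsto_regEnergy hlam hf hv).eventually_lt_const hvr, self_mem_nhdsWithin]
    with ε hεr hε
  obtain ⟨huεH1, huεmin⟩ := huε ε hε
  calc rofEnergy lam a b f (uε ε) ≤ ENNReal.ofReal (regEnergy lam ε a b f (uε ε) (uε' ε)) :=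
        rofEnergy_le_regEnergy hlam (le_of_lt hε) hf huεH1
    _ ≤ ENNReal.ofReal (regEnergy lam ε a b f v v') := ENNReal.ofReal_le_ofReal (huεmin v v' hv)
    _ ≤ ENNReal.ofReal r := ENNReal.ofReal_le_ofReal hεr.le
    _ < c := hrc

theorem minimizerEps_tendsto_rof_minimizer_L2_general
    {n : ℕ} (a b : ℝ) (hab : a < b) (lam : ℝ) (hlam : 0 < lam)
    (f : ℝ → EuclideanSpace ℝ (Fin n)) (hf : MemLp f 2 (volume.restrict (Ioo a b)))
    (uε uε' : ℝ → ℝ → EuclideanSpace ℝ (Fin n))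
    (huε : ∀ ε : ℝ, 0 < ε → IsMinimizerEps lam ε a b f (uε ε) (uε' ε))
    (u : ℝ → EuclideanSpace ℝ (Fin n)) (hu : IsMinimizer lam a b f u) :
    Tendsto (fun ε : ℝ => ∫ x in Ioo a b, ‖uε ε x - u x‖ ^ 2) (𝓝[>] 0) (𝓝 0) := by
  refine tendsto_order.2 ⟨fun c hc => .of_forall fun ε => hc.trans_le (by positivity),
    fun ρ hρ => ?_⟩
  have gap_pos : 0 < ENNReal.ofReal ((1 / (4 * lam)) * ρ) := ENNReal.ofReal_pos.2 (by positivity)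
  have energy_lt := eventually_rofEnergy_minimizerEps_lt hab hlam.le hf huε hu.1
    (ENNReal.lt_add_right hu.rofEnergy_ne_top gap_pos.ne')
  filter_upwards [energy_lt, self_mem_nhdsWithin] with ε hlt hε
  have growth := hu.quadratic_growth_of_inH1 hab.le hlam.le hf (huε ε hε).1
  have weighted_lt := (ENNReal.add_lt_add_iff_left hu.rofEnergy_ne_top).1 (growth.trans_lt hlt)
  rw [ENNReal.ofReal_lt_ofReal_iff (by positivity)] at weighted_lt
  exact lt_of_mul_lt_mul_left weighted_lt (by positivity)

/-- for `f ∈ H¹(I,ℝⁿ)`, the minimizers `u_ε` of `E_ε` converge in `L²(I,ℝⁿ)`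
to the ROF minimizer `u` as `ε → 0⁺`. -/
theorem minimizerEps_tendsto_rof_minimizer_L2
    {n : ℕ} (hn : 1 ≤ n) (a b : ℝ) (hab : a < b) (lam : ℝ) (hlam : 0 < lam)
    (f f' : ℝ → EuclideanSpace ℝ (Fin n)) (hf_meas : Measurable f)
    (hf_sq : SqIntOn f (Set.Ioo a b)) (hf : InH1 a b f f')
    (uε uε' : ℝ → ℝ → EuclideanSpace ℝ (Fin n))
    (huε : ∀ ε : ℝ, 0 < ε → IsMinimizerEps lam ε a b f (uε ε) (uε' ε))
    (u : ℝ → EuclideanSpace ℝ (Fin n)) (hu : IsMinimizer lam a b f u) :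
    Filter.Tendsto (fun ε : ℝ => ∫ x in Set.Ioo a b, ‖uε ε x - u x‖ ^ 2)
      (nhdsWithin 0 (Set.Ioi 0)) (nhds 0) := by
  exact minimizerEps_tendsto_rof_minimizer_L2_general a b hab lam hlam f
    ((memLp_two_iff_integrable_sq_norm hf_meas.aestronglyMeasurable).2 hf_sq) uε uε' huε u hu
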